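/- arXiv:2205.08991 — 3 statements merged into one kernel-verified Lean document; each statement's English description precedes it below -/
import Mathlib

section
/- Let A be a subalgebra of the algebra of n×n complex matrices (acting on column vectors on the left and on row vectors on the right). Suppose there exists M ∈ A having a simple eigenvalue λ, and let v be a nonzero column vector with Mv = λv and w a nonzero row vector with wM = λw. Then the following are equivalent: (i) the left A-module ℂⁿ (column vectors) is simple; (ii) both Av = ℂⁿ (column vectors) and wA = ℂⁿ (row vectors); (iii) the right A-module ℂⁿ (row vectors) is simple. -/
open Matrix in
theorem ker_dim {n : ℕ} (M : Matrix (Fin n) (Fin n) ℂ) (lam : ℂ)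
    (hsimple : (Matrix.charpoly M).rootMultiplicity lam = 1)
    (v : Fin n → ℂ) (hv : v ≠ 0) (hMv : M.mulVec v = lam • v)
    (u : Fin n → ℂ) (hu : M.mulVec u = lam • u) : ∃ c : ℂ, c • v = u := by
  have h1 : Module.finrank ℂ (Module.End.maxGenEigenspace (Matrix.toLin' M) lam) = 1 := by
    rw [LinearMap.finrank_maxGenEigenspace_eq, Matrix.charpoly_toLin', hsimple]
  have hm : ∀ x : Fin n → ℂ, M.mulVec x = lam • x → x ∈ Module.End.maxGenEigenspace (Matrix.toLin' M) lam := by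
    intro x hx
    rw [Module.End.mem_maxGenEigenspace]
    refine ⟨1, ?_⟩
    simp [hx]
  obtain ⟨c, hc⟩ := exists_smul_eq_of_finrank_eq_one h1 (x := ⟨v, hm v hMv⟩)
    (by simpa [Subtype.ext_iff] using hv) ⟨u, hm u hu⟩
  exact ⟨c, by simpa [Subtype.ext_iff] using hc⟩

open Matrix in
theorem aeval_mulVec_eig {n : ℕ} (M : Matrix (Fin n) (Fin n) ℂ) (lam : ℂ) (q : Polynomial ℂ)
    (v : Fin n → ℂ) (hMv : M.mulVec v = lam • v) :
    (Polynomial.aeval M q).mulVec v = q.eval lam • v := by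
  induction q using Polynomial.induction_on' with
  | add p q hp hq => simp [Matrix.add_mulVec, hp, hq, add_smul]
  | monomial k a =>
    have : ∀ k : ℕ, (M ^ k).mulVec v = lam ^ k • v := by
      intro k
      induction k with
      | zero => simp
      | succ k ih => rw [pow_succ, ← Matrix.mulVec_mulVec, hMv, Matrix.mulVec_smul, ih, smul_smul, pow_succ, mul_comm]
    rw [Polynomial.aeval_monomial, ← Algebra.smul_def, Matrix.smul_mulVec, this, smul_smul]
    simp

open Matrix in
theorem left_iff (n : ℕ) (A : Subalgebra ℂ (Matrix (Fin n) (Fin n) ℂ))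
    (M : Matrix (Fin n) (Fin n) ℂ) (hM : M ∈ A) (lam : ℂ)
    (hsimple : (Matrix.charpoly M).rootMultiplicity lam = 1)
    (v : Fin n → ℂ) (hv : v ≠ 0) (hMv : M.mulVec v = lam • v)
    (w : Fin n → ℂ) (hw : w ≠ 0) (hwM : Matrix.vecMul w M = lam • w) :
    ((∀ U : Submodule ℂ (Fin n → ℂ),
        (∀ N ∈ A, ∀ u ∈ U, N.mulVec u ∈ U) → U = ⊥ ∨ U = ⊤) ↔
      ((∀ u : Fin n → ℂ, ∃ N ∈ A, N.mulVec v = u) ∧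
       (∀ u : Fin n → ℂ, ∃ N ∈ A, Matrix.vecMul w N = u))) := by
  constructor
  · intro h
    constructor
    · let U : Submodule ℂ (Fin n → ℂ) :=
        { carrier := {u | ∃ N ∈ A, N.mulVec v = u}
          zero_mem' := ⟨0, A.zero_mem, by simp⟩
          add_mem' := by
            rintro _ _ ⟨a, ha, rfl⟩ ⟨b, hb, rfl⟩
            exact ⟨a + b, A.add_mem ha hb, Matrix.add_mulVec _ _ _⟩
          smul_mem' := by
            rintro c _ ⟨a, ha, rfl⟩
            exact ⟨c • a, A.smul_mem ha c, Matrix.smul_mulVec _ _ _⟩ }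
      have hU : U = ⊤ := by
        refine (h U ?_).resolve_left ?_
        · rintro N hN _ ⟨a, ha, rfl⟩
          exact ⟨N * a, A.mul_mem hN ha, by simp⟩
        · intro hb
          have : v ∈ U := ⟨1, A.one_mem, by simp⟩
          rw [hb] at this
          exact hv (by simpa using this)
      intro u
      have : u ∈ U := hU ▸ Submodule.mem_top
      exact this
    · let W : Submodule ℂ (Fin n → ℂ) :=
        { carrier := {u | ∃ N ∈ A, Matrix.vecMul w N = u}
          zero_mem' := ⟨0, A.zero_mem, by simp⟩
          add_mem' := by
            rintro _ _ ⟨a, ha, rfl⟩ ⟨b, hb, rfl⟩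
            exact ⟨a + b, A.add_mem ha hb, Matrix.vecMul_add _ _ _⟩
          smul_mem' := by
            rintro c _ ⟨a, ha, rfl⟩
            exact ⟨c • a, A.smul_mem ha c, Matrix.vecMul_smul _ _ _⟩ }
      let U : Submodule ℂ (Fin n → ℂ) :=
        { carrier := {u | ∀ N ∈ A, w ⬝ᵥ N.mulVec u = 0}
          zero_mem' := by intro N _; simp
          add_mem' := by
            intro a b ha hb N hN
            rw [Matrix.mulVec_add, dotProduct_add, ha N hN, hb N hN, add_zero]
          smul_mem' := by
            intro c a ha N hN
            rw [Matrix.mulVec_smul, dotProduct_smul, ha N hN, smul_zero] }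
      have hU : U = ⊥ := by
        refine (h U ?_).resolve_right ?_
        · intro N hN u hu N' hN'
          rw [Matrix.mulVec_mulVec]
          exact hu _ (A.mul_mem hN' hN)
        · intro ht
          apply hw
          apply dotProduct_eq_zero
          intro u
          have : u ∈ U := ht ▸ Submodule.mem_top
          simpa using this 1 A.one_mem
      have hW : W = ⊤ := by
        by_contra hne
        obtain ⟨f, hf0, hf⟩ := Submodule.exists_le_ker_of_lt_top W (lt_top_iff_ne_top.2 hne)
        obtain ⟨x, hx⟩ := (dotProductEquiv ℂ (Fin n)).surjective f
        have hx' : x ∈ U := by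
          intro N hN
          have : f (Matrix.vecMul w N) = 0 := hf ⟨N, hN, rfl⟩
          rw [← hx] at this
          rw [Matrix.dotProduct_mulVec, dotProduct_comm]
          exact this
        rw [hU] at hx'
        have : x = 0 := by simpa using hx'
        apply hf0
        rw [← hx, this, map_zero]
      intro u
      have : u ∈ W := hW ▸ Submodule.mem_top
      exact this
  · rintro ⟨h1, h2⟩ U hU
    by_cases hwU : ∀ u ∈ U, w ⬝ᵥ u = 0
    · left
      rw [eq_bot_iff]
      intro u hu
      have : u = 0 := by
        apply dotProduct_eq_zero
        intro x
        obtain ⟨N, hN, rfl⟩ := h2 x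
        rw [dotProduct_comm, ← Matrix.dotProduct_mulVec]
        exact hwU _ (hU N hN u hu)
      simp [this]
    · right
      push Not at hwU
      obtain ⟨u, hu, hwu⟩ := hwU
      obtain ⟨q, hq, hq'⟩ := Polynomial.exists_eq_pow_rootMultiplicity_mul_and_not_dvd
        M.charpoly M.charpoly_monic.ne_zero lam
      rw [hsimple, pow_one] at hq
      rw [Polynomial.dvd_iff_isRoot, Polynomial.IsRoot.def] at hq'
      have hE : Polynomial.aeval M q ∈ A := by
        have := Polynomial.aeval_mem_adjoin_singleton ℂ M (p := q)
        exact Algebra.adjoin_le (by simpa using hM) this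
      set E := Polynomial.aeval M q with hEdef
      have hME : M * E = lam • E := by
        have := M.aeval_self_charpoly
        rw [hq, map_mul, map_sub, Polynomial.aeval_X, Polynomial.aeval_C, sub_mul, ← Algebra.smul_def] at this
        exact sub_eq_zero.1 this
      obtain ⟨c, hc⟩ := ker_dim M lam hsimple v hv hMv (E.mulVec u) (by
        rw [Matrix.mulVec_mulVec, hME, Matrix.smul_mulVec])
      have hwE : Matrix.vecMul w E = q.eval lam • w := by
        have := aeval_mulVec_eig Mᵀ lam q w (by rw [Matrix.mulVec_transpose, hwM])
        have hT : Polynomial.aeval Mᵀ q = Eᵀ := by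
          rw [hEdef, Polynomial.aeval_eq_sum_range, Polynomial.aeval_eq_sum_range]
          simp [Matrix.transpose_sum, Matrix.transpose_pow]
        rwa [hT, Matrix.mulVec_transpose] at this
      have hc0 : c ≠ 0 := by
        rintro rfl
        have : w ⬝ᵥ E.mulVec u = 0 := by rw [← hc]; simp
        rw [Matrix.dotProduct_mulVec, hwE, smul_dotProduct] at this
        exact (mul_ne_zero hq' hwu) this
      have hvU : v ∈ U := by
        have := hU E hE u hu
        rw [← hc] at this
        exact (U.smul_mem_iff hc0).1 this
      rw [eq_top_iff]
      intro x _
      obtain ⟨N, hN, rfl⟩ := h1 x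
      exact hU N hN v hvU

open Matrix in
/-- The transposed subalgebra. -/
def transposeSub {n : ℕ} (A : Subalgebra ℂ (Matrix (Fin n) (Fin n) ℂ)) :
    Subalgebra ℂ (Matrix (Fin n) (Fin n) ℂ) where
  carrier := {N | Nᵀ ∈ A}
  mul_mem' := by
    intro a b ha hb
    simp only [Set.mem_ofPred_eq, Matrix.transpose_mul] at *
    exact A.mul_mem hb ha
  add_mem' := by
    intro a b ha hb
    simp only [Set.mem_ofPred_eq, Matrix.transpose_add] at *
    exact A.add_mem ha hb
  algebraMap_mem' := by
    intro r
    simp only [Set.mem_ofPred_eq, Algebra.algebraMap_eq_smul_one, Matrix.transpose_smul,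
      Matrix.transpose_one]
    exact A.smul_mem A.one_mem r

open Matrix in
theorem forall_T {n : ℕ} (A : Subalgebra ℂ (Matrix (Fin n) (Fin n) ℂ))
    (P : Matrix (Fin n) (Fin n) ℂ → Prop) :
    (∃ N ∈ transposeSub A, P N) ↔ ∃ N ∈ A, P Nᵀ := by
  constructor
  · rintro ⟨N, hN, h⟩
    exact ⟨Nᵀ, hN, by simpa using h⟩
  · rintro ⟨N, hN, h⟩
    exact ⟨Nᵀ, by change Nᵀᵀ ∈ A; simpa using hN, h⟩

/-- Norton's criterion (Proposition: simple eigenvalue test).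
(i) the left A-module ℂⁿ is simple ↔ (ii) Av = ℂⁿ and wA = ℂⁿ ↔
(iii) the right A-module ℂⁿ is simple. -/
theorem stmt0 (n : ℕ) (A : Subalgebra ℂ (Matrix (Fin n) (Fin n) ℂ))
    (M : Matrix (Fin n) (Fin n) ℂ) (hM : M ∈ A) (lam : ℂ)
    (hsimple : (Matrix.charpoly M).rootMultiplicity lam = 1)
    (v : Fin n → ℂ) (hv : v ≠ 0) (hMv : M.mulVec v = lam • v)
    (w : Fin n → ℂ) (hw : w ≠ 0) (hwM : Matrix.vecMul w M = lam • w) :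
    ((∀ U : Submodule ℂ (Fin n → ℂ),
        (∀ N ∈ A, ∀ u ∈ U, N.mulVec u ∈ U) → U = ⊥ ∨ U = ⊤) ↔
      ((∀ u : Fin n → ℂ, ∃ N ∈ A, N.mulVec v = u) ∧
       (∀ u : Fin n → ℂ, ∃ N ∈ A, Matrix.vecMul w N = u)))
    ∧
    (((∀ u : Fin n → ℂ, ∃ N ∈ A, N.mulVec v = u) ∧
      (∀ u : Fin n → ℂ, ∃ N ∈ A, Matrix.vecMul w N = u)) ↔
      (∀ U : Submodule ℂ (Fin n → ℂ),
        (∀ N ∈ A, ∀ u ∈ U, Matrix.vecMul u N ∈ U) → U = ⊥ ∨ U = ⊤)) := by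
  refine ⟨left_iff n A M hM lam hsimple v hv hMv w hw hwM, ?_⟩
  have key := left_iff n (transposeSub A) M.transpose
    (by change M.transpose.transpose ∈ A; simpa using hM) lam
    (by rwa [Matrix.charpoly_transpose]) w hw (by rwa [Matrix.mulVec_transpose])
    v hv (by rwa [Matrix.vecMul_transpose])
  simp only [forall_T, Matrix.mulVec_transpose, Matrix.vecMul_transpose] at key
  rw [and_comm, ← key]
  refine forall_congr' fun U => imp_congr_left ?_
  constructor
  · intro h N hN u hu
    rw [← Matrix.mulVec_transpose]
    exact h N.transpose (by change N.transpose.transpose ∈ A; simpa using hN) u hu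
  · intro h N hN u hu
    rw [← Matrix.vecMul_transpose]
    exact h N.transpose hN u hu
end

section
/- Let A be a subalgebra of n×n complex matrices such that every element of A has at least one eigenvalue of algebraic multiplicity ≥ 2. Let M ∈ A have the maximal number of distinct eigenvalues among elements of A, let λ be a multiple eigenvalue of M, let E = ker((M − λI)ⁿ) be its generalized eigenspace, F the sum of the other generalized eigenspaces, and P ∈ A the projection onto E along F. Define K = {v ∈ E : for all N ∈ A, PNv ∈ ℂv}. Then K ≠ {0}, and for any nonzero v ∈ K, the orbit Av is a proper A-submodule of ℂⁿ. In particular ℂⁿ is a reducible A-module. -/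
/-- Generalized eigenspace of an n×n matrix for an eigenvalue λ. -/
noncomputable def genE (n : ℕ) (M : Matrix (Fin n) (Fin n) ℂ) (lam : ℂ) :
    Submodule ℂ (Fin n → ℂ) :=
  LinearMap.ker (Matrix.mulVecLin ((M - lam • (1 : Matrix (Fin n) (Fin n) ℂ)) ^ n))

/-- Sum of the generalized eigenspaces of M for values other than λ. -/
noncomputable def genF (n : ℕ) (M : Matrix (Fin n) (Fin n) ℂ) (lam : ℂ) :
    Submodule ℂ (Fin n → ℂ) :=
  ⨆ μ ≠ lam, genE n M μ

theorem genE_eq (n : ℕ) (M : Matrix (Fin n) (Fin n) ℂ) (lam : ℂ) :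
    genE n M lam = Module.End.maxGenEigenspace (Matrix.toLin' M) lam := by
  rw [Module.End.maxGenEigenspace_eq_genEigenspace_finrank, Module.finrank_fin_fun,
    Module.End.genEigenspace_nat, genE, ← Matrix.toLin'_apply', Matrix.toLin'_pow]
  simp [Algebra.algebraMap_eq_smul_one, Module.End.one_eq_id]

theorem mem_roots_iff (n : ℕ) (M : Matrix (Fin n) (Fin n) ℂ) (a : ℂ) :
    a ∈ M.charpoly.roots.toFinset ↔ ∃ x, x ≠ 0 ∧ M.mulVec x = a • x := by
  rw [Multiset.mem_toFinset, Polynomial.mem_roots M.charpoly_monic.ne_zero,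
    ← Matrix.charpoly_toLin', ← Module.End.hasEigenvalue_iff_isRoot_charpoly]
  constructor
  · intro h
    obtain ⟨x, hx⟩ := h.exists_hasEigenvector
    exact ⟨x, hx.2, by simpa using hx.apply_eq_smul⟩
  · rintro ⟨x, hx, h⟩
    exact Module.End.hasEigenvalue_of_hasEigenvector (x := x)
      (Module.End.hasEigenvector_iff.mpr ⟨Module.End.mem_eigenspace_iff.mpr (by simpa using h), hx⟩)

theorem nilp_of_trace {V : Type*} [AddCommGroup V] [Module ℂ V] [FiniteDimensional ℂ V]
    [Nontrivial V] (f : Module.End ℂ V)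
    (h : ∀ a b, f.HasEigenvalue a → f.HasEigenvalue b → a = b)
    (ht : LinearMap.trace ℂ V f = 0) : IsNilpotent f := by
  obtain ⟨c, hc⟩ := Module.End.exists_eigenvalue f
  have hs : f.charpoly.Splits := IsAlgClosed.splits _
  have hr : f.charpoly.roots = Multiset.replicate (Module.finrank ℂ V) c := by
    rw [Multiset.eq_replicate]
    constructor
    · rw [← hs.natDegree_eq_card_roots, LinearMap.charpoly_natDegree]
    · intro b hb
      rw [Polynomial.mem_roots f.charpoly_monic.ne_zero,
        ← Module.End.hasEigenvalue_iff_isRoot_charpoly] at hb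
      exact h _ _ hb hc
  have hd : 0 < Module.finrank ℂ V := Module.finrank_pos
  have hc0 : c = 0 := by
    rw [Module.End.trace_eq_sum_roots_charpoly_of_splits hs, hr] at ht
    simp at ht
    rcases ht with ht | ht
    · omega
    · exact ht
  have hX : f.charpoly = Polynomial.X ^ Module.finrank ℂ V := by
    rw [hs.eq_prod_roots_of_monic f.charpoly_monic, hr, hc0]
    simp
  refine ⟨Module.finrank ℂ V, ?_⟩
  have := f.aeval_self_charpoly
  rw [hX] at this
  simpa using this

section
attribute [local instance] LieRing.ofAssociativeRing

theorem common_eig {V : Type*} [AddCommGroup V] [Module ℂ V] [FiniteDimensional ℂ V]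
    [Nontrivial V] (B : Subalgebra ℂ (Module.End ℂ V))
    (h : ∀ f ∈ B, ∀ a b, f.HasEigenvalue a → f.HasEigenvalue b → a = b) :
    ∃ v : V, v ≠ 0 ∧ ∀ f ∈ B, ∃ c : ℂ, f v = c • v := by
  let L : LieSubalgebra ℂ (Module.End ℂ V) :=
    { (Subalgebra.toSubmodule B ⊓ LinearMap.ker (LinearMap.trace ℂ V)) with
      lie_mem' := by
        rintro f g ⟨hf, -⟩ ⟨hg, -⟩
        refine ⟨?_, ?_⟩
        · exact B.sub_mem (B.mul_mem hf hg) (B.mul_mem hg hf)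
        · simp [LinearMap.mem_ker, Ring.lie_def, LinearMap.trace_mul_comm ℂ f g] }
  have hL : ∀ f, f ∈ L ↔ f ∈ B ∧ LinearMap.trace ℂ V f = 0 := fun f => Iff.rfl
  haveI : LieModule.IsNilpotent L V := by
    rw [LieModule.isNilpotent_iff_forall' (R := ℂ)]
    rintro ⟨f, hf⟩
    exact nilp_of_trace f (h f ((hL f).1 hf).1) ((hL f).1 hf).2
  obtain ⟨⟨v, hv⟩, hv0⟩ := @exists_ne _ (LieModule.nontrivial_max_triv_of_isNilpotent ℂ L V) 0
  rw [LieModule.mem_maxTrivSubmodule] at hv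
  refine ⟨v, fun h => hv0 (by simpa using h), fun f hf => ?_⟩
  have hd : (Module.finrank ℂ V : ℂ) ≠ 0 := by exact_mod_cast (Module.finrank_pos (R := ℂ) (M := V)).ne'
  set c : ℂ := LinearMap.trace ℂ V f / Module.finrank ℂ V
  have hg : f - c • (1 : Module.End ℂ V) ∈ L := by
    rw [hL]
    refine ⟨B.sub_mem hf (B.smul_mem B.one_mem _), ?_⟩
    simp [c, hd]
  refine ⟨c, ?_⟩
  have := hv ⟨_, hg⟩
  change (f - c • (1 : Module.End ℂ V)) v = 0 at this
  simpa [sub_eq_zero] using this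

end

/-- Van der Hoeven's reducibility criterion: if every element of A has a
multiple eigenvalue, M ∈ A has the maximal number of distinct eigenvalues,
λ is a multiple eigenvalue of M with generalized eigenspace E and P ∈ A the
projection onto E along the rest, then
K = {v ∈ E : ∀ N ∈ A, PNv ∈ ℂv} is nonzero, the orbit of any nonzero v ∈ K
is a proper A-submodule, and ℂⁿ is a reducible A-module. -/
theorem stmt7 (n : ℕ) (A : Subalgebra ℂ (Matrix (Fin n) (Fin n) ℂ))
    (hmult : ∀ N ∈ A, ∃ μ : ℂ, 2 ≤ (Matrix.charpoly N).rootMultiplicity μ)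
    (M : Matrix (Fin n) (Fin n) ℂ) (hM : M ∈ A)
    (hmax : ∀ N ∈ A, (Matrix.charpoly N).roots.toFinset.card ≤
        (Matrix.charpoly M).roots.toFinset.card)
    (lam : ℂ) (hlam : 2 ≤ (Matrix.charpoly M).rootMultiplicity lam)
    (P : Matrix (Fin n) (Fin n) ℂ) (hPA : P ∈ A)
    (hP1 : ∀ x ∈ genE n M lam, P.mulVec x = x)
    (hP2 : ∀ x ∈ genF n M lam, P.mulVec x = 0) :
    (∃ v ∈ genE n M lam, v ≠ 0 ∧
        ∀ N ∈ A, ∃ c : ℂ, P.mulVec (N.mulVec v) = c • v) ∧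
    (∀ v ∈ genE n M lam, v ≠ 0 →
        (∀ N ∈ A, ∃ c : ℂ, P.mulVec (N.mulVec v) = c • v) →
        ¬ (∀ u : Fin n → ℂ, ∃ N ∈ A, N.mulVec v = u)) ∧
    (∃ U : Submodule ℂ (Fin n → ℂ),
        (∀ N ∈ A, ∀ u ∈ U, N.mulVec u ∈ U) ∧ U ≠ ⊥ ∧ U ≠ ⊤) := by
  have hEF : genE n M lam ⊔ genF n M lam = ⊤ := by
    rw [eq_top_iff, ← Module.End.iSup_maxGenEigenspace_eq_top (Matrix.toLin' M)]
    refine iSup_le fun μ => ?_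
    rw [← genE_eq]
    by_cases hμ : μ = lam
    · subst hμ; exact le_sup_left
    · exact le_trans (le_iSup₂_of_le (f := fun μ (_ : μ ≠ lam) => genE n M μ) μ hμ le_rfl)
        le_sup_right
  have hPE : ∀ y, P.mulVec y ∈ genE n M lam := by
    intro y
    have : y ∈ genE n M lam ⊔ genF n M lam := hEF ▸ Submodule.mem_top
    obtain ⟨e, he, f, hf, rfl⟩ := Submodule.mem_sup.1 this
    rw [Matrix.mulVec_add, hP1 e he, hP2 f hf, add_zero]
    exact he
  have hdim : 2 ≤ Module.finrank ℂ (genE n M lam) := by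
    rw [genE_eq, LinearMap.finrank_maxGenEigenspace_eq, Matrix.charpoly_toLin']
    exact hlam
  haveI : Nontrivial (genE n M lam) := Module.nontrivial_of_finrank_pos (R := ℂ) (by omega)
  let E := genE n M lam
  let cmp : Matrix (Fin n) (Fin n) ℂ → Module.End ℂ E := fun N =>
    ((P * N).mulVecLin.comp E.subtype).codRestrict E (fun x => by
      simpa [← Matrix.mulVec_mulVec] using hPE _)
  have hcmp : ∀ N (x : E), ((cmp N x : E) : Fin n → ℂ) = P.mulVec (N.mulVec x) := by
    intro N x
    simp [cmp, Matrix.mulVec_mulVec]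
  have key : ∀ N ∈ A, ∀ a b, (cmp N).HasEigenvalue a → (cmp N).HasEigenvalue b → a = b := by
    intro N hN a b ha hb
    by_contra hab
    have hev : ∀ a, (cmp N).HasEigenvalue a → ∃ x ∈ E, x ≠ 0 ∧ P.mulVec (N.mulVec x) = a • x := by
      intro a ha
      obtain ⟨x, hx⟩ := ha.exists_hasEigenvector
      refine ⟨x, x.2, by simpa using hx.2, ?_⟩
      rw [← hcmp, hx.apply_eq_smul]; rfl
    set S := (Matrix.charpoly M).roots.toFinset with hS
    obtain ⟨t, ht⟩ := Infinite.exists_notMem_finset (S.image (fun s => s - a) ∪ S.image (fun s => s - b))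
    simp only [Finset.mem_union, Finset.mem_image, not_or, not_exists, not_and] at ht
    have hta : a + t ∉ S := fun h => ht.1 _ h (by ring)
    have htb : b + t ∉ S := fun h => ht.2 _ h (by ring)
    let N' := M * (1 - P) + P * N * P + t • P
    have hN' : N' ∈ A := A.add_mem (A.add_mem (A.mul_mem hM (A.sub_mem A.one_mem hPA))
      (A.mul_mem (A.mul_mem hPA hN) hPA)) (A.smul_mem hPA t)
    have hact : ∀ x, N'.mulVec x = M.mulVec (x - P.mulVec x) + P.mulVec (N.mulVec (P.mulVec x))
        + t • P.mulVec x := by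
      intro x
      simp [N', Matrix.add_mulVec, Matrix.sub_mulVec, ← Matrix.mulVec_mulVec, Matrix.smul_mulVec]
    have hE' : ∀ a, (cmp N).HasEigenvalue a → a + t ∈ N'.charpoly.roots.toFinset := by
      intro a ha
      obtain ⟨x, hxE, hx0, hx⟩ := hev a ha
      refine (mem_roots_iff _ _ _).2 ⟨x, hx0, ?_⟩
      rw [hact, hP1 x hxE, hx]
      simp [add_smul]
    have hsub : insert (a + t) (insert (b + t) (S.erase lam)) ⊆ N'.charpoly.roots.toFinset := by
      intro μ hμ
      rw [Finset.mem_insert, Finset.mem_insert, Finset.mem_erase] at hμ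
      rcases hμ with rfl | rfl | ⟨hne, hμ⟩
      · exact hE' a ha
      · exact hE' b hb
      · obtain ⟨x, hx0, hx⟩ := (mem_roots_iff _ _ _).1 hμ
        refine (mem_roots_iff _ _ _).2 ⟨x, hx0, ?_⟩
        have hxF : x ∈ genF n M lam := by
          refine (le_iSup₂_of_le (f := fun μ (_ : μ ≠ lam) => genE n M μ) μ hne le_rfl :
            genE n M μ ≤ _) ?_
          rw [genE_eq]
          refine (Module.End.genEigenspace _ μ).monotone (a := 1) le_top ?_
          exact Module.End.mem_eigenspace_iff.2 (by simpa using hx)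
        rw [hact, hP2 x hxF]
        simp [hx]
    have hlS : lam ∈ S := by
      rw [hS, Multiset.mem_toFinset, ← Multiset.count_pos, Polynomial.count_roots]
      omega
    have h1 := Finset.card_le_card hsub
    have h2 := hmax N' hN'
    rw [Finset.card_insert_of_notMem, Finset.card_insert_of_notMem,
      Finset.card_erase_of_mem hlS] at h1
    · have := Finset.card_pos.2 ⟨_, hlS⟩
      omega
    · exact fun h => htb (Finset.mem_of_mem_erase h)
    · rw [Finset.mem_insert, not_or]
      exact ⟨fun h => hab (add_right_cancel h), fun h => hta (Finset.mem_of_mem_erase h)⟩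
  let B : Subalgebra ℂ (Module.End ℂ E) :=
    { carrier := {f | ∃ N ∈ A, f = cmp N}
      mul_mem' := by
        rintro _ _ ⟨N, hN, rfl⟩ ⟨N', hN', rfl⟩
        refine ⟨N * P * N', A.mul_mem (A.mul_mem hN hPA) hN', ?_⟩
        ext1 x
        apply Subtype.ext
        rw [Module.End.mul_apply, hcmp, hcmp, hcmp]
        simp [← Matrix.mulVec_mulVec]
      add_mem' := by
        rintro _ _ ⟨N, hN, rfl⟩ ⟨N', hN', rfl⟩
        refine ⟨N + N', A.add_mem hN hN', ?_⟩
        ext1 x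
        apply Subtype.ext
        rw [LinearMap.add_apply, Submodule.coe_add, hcmp, hcmp, hcmp, Matrix.add_mulVec,
          Matrix.mulVec_add]
      algebraMap_mem' := by
        intro r
        refine ⟨algebraMap ℂ _ r, A.algebraMap_mem r, ?_⟩
        ext1 x
        apply Subtype.ext
        rw [hcmp, Module.algebraMap_end_apply, Algebra.algebraMap_eq_smul_one, Matrix.smul_mulVec,
          Matrix.one_mulVec, Matrix.mulVec_smul, hP1 x x.2]
        rfl }
  have part1 : ∃ v ∈ genE n M lam, v ≠ 0 ∧
        ∀ N ∈ A, ∃ c : ℂ, P.mulVec (N.mulVec v) = c • v := by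
    obtain ⟨v, hv0, hv⟩ := common_eig B (by
      rintro _ ⟨N, hN, rfl⟩
      exact key N hN)
    refine ⟨v, v.2, by simpa using hv0, fun N hN => ?_⟩
    obtain ⟨c, hc⟩ := hv _ ⟨N, hN, rfl⟩
    refine ⟨c, ?_⟩
    rw [← hcmp, hc]; rfl
  have part2 : ∀ v ∈ genE n M lam, v ≠ 0 →
        (∀ N ∈ A, ∃ c : ℂ, P.mulVec (N.mulVec v) = c • v) →
        ¬ (∀ u : Fin n → ℂ, ∃ N ∈ A, N.mulVec v = u) := by
    intro v hv hv0 hK hall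
    have : genE n M lam ≤ Submodule.span ℂ {v} := by
      intro u hu
      obtain ⟨N, hN, hNu⟩ := hall u
      obtain ⟨c, hc⟩ := hK N hN
      rw [hNu, hP1 u hu] at hc
      exact Submodule.mem_span_singleton.2 ⟨c, hc.symm⟩
    have := Submodule.finrank_mono this
    rw [finrank_span_singleton hv0] at this
    omega
  refine ⟨part1, part2, ?_⟩
  obtain ⟨v, hv, hv0, hK⟩ := part1
  let U : Submodule ℂ (Fin n → ℂ) :=
    { carrier := {u | ∃ N ∈ A, N.mulVec v = u}
      add_mem' := by
        rintro _ _ ⟨N, hN, rfl⟩ ⟨N', hN', rfl⟩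
        exact ⟨N + N', A.add_mem hN hN', Matrix.add_mulVec _ _ _⟩
      zero_mem' := ⟨0, A.zero_mem, Matrix.zero_mulVec _⟩
      smul_mem' := by
        rintro c _ ⟨N, hN, rfl⟩
        exact ⟨c • N, A.smul_mem hN c, Matrix.smul_mulVec _ _ _⟩ }
  refine ⟨U, ?_, ?_, ?_⟩
  · rintro N hN _ ⟨N', hN', rfl⟩
    exact ⟨N * N', A.mul_mem hN hN', (Matrix.mulVec_mulVec _ _ _).symm⟩
  · intro h
    have : v ∈ U := ⟨1, A.one_mem, Matrix.one_mulVec v⟩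
    rw [h] at this
    exact hv0 (by simpa using this)
  · intro h
    refine part2 v hv hv0 hK fun u => ?_
    have : u ∈ U := h ▸ Submodule.mem_top
    exact this
end

section
/- A multiplicative semigroup S of nilpotent endomorphisms of a nonzero finite-dimensional complex vector space V has a common nonzero kernel vector: there exists v ∈ V, v ≠ 0, with s(v) = 0 for all s ∈ S. (Equivalently, ∩_{s∈S} ker(s) ≠ {0}.) -/
attribute [local instance] LieRing.ofAssociativeRing

/-- The linear span of a multiplicatively closed set of endomorphisms, as a Lie subalgebra. -/
def spanLie {V : Type*} [AddCommGroup V] [Module ℂ V] (S : Set (Module.End ℂ V))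
    (hcomp : ∀ s ∈ S, ∀ t ∈ S, s * t ∈ S) : LieSubalgebra ℂ (Module.End ℂ V) :=
  { Submodule.span ℂ S with
    lie_mem' := by
      intro x y hx hy
      have key : ∀ x ∈ Submodule.span ℂ S, ∀ y ∈ Submodule.span ℂ S,
          x * y ∈ Submodule.span ℂ S := by
        intro x hx y hy
        have h := Submodule.mul_mem_mul hx hy
        rw [Submodule.span_mul_span] at h
        refine Submodule.span_mono ?_ h
        rintro _ ⟨s, hs, t, ht, rfl⟩
        exact hcomp s hs t ht
      rw [Ring.lie_def]
      exact (Submodule.span ℂ S).sub_mem (key x hx y hy) (key y hy x hx) }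

/-- (Levitski) A multiplicative semigroup of nilpotent endomorphisms of a
nonzero finite-dimensional complex vector space has a common nonzero kernel
vector. -/
theorem stmt9 (V : Type*) [AddCommGroup V] [Module ℂ V]
    [FiniteDimensional ℂ V] [Nontrivial V]
    (S : Set (Module.End ℂ V))
    (hcomp : ∀ s ∈ S, ∀ t ∈ S, s * t ∈ S)
    (hnil : ∀ s ∈ S, IsNilpotent s) :
    ∃ v : V, v ≠ 0 ∧ ∀ s ∈ S, s v = 0 := by
  let L := spanLie S hcomp
  have htr0 : ∀ x ∈ Submodule.span ℂ S, LinearMap.trace ℂ V x = 0 := by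
    intro x hx
    have : Submodule.span ℂ S ≤ LinearMap.ker (LinearMap.trace ℂ V) := by
      rw [Submodule.span_le]
      intro s hs
      exact (LinearMap.isNilpotent_trace_of_isNilpotent (hnil s hs)).eq_zero
    exact this hx
  have htf : LieModule.traceForm ℂ L V = 0 := by
    ext ⟨x, hx⟩ ⟨y, hy⟩
    change LinearMap.trace ℂ V (x * y) = 0
    apply htr0
    have h := Submodule.mul_mem_mul (M := Submodule.span ℂ S) (N := Submodule.span ℂ S) hx hy
    rw [Submodule.span_mul_span] at h
    refine Submodule.span_mono ?_ h
    rintro _ ⟨s, hs, t, ht, rfl⟩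
    exact hcomp s hs t ht
  have hn := LieModule.isNilpotent_derivedSeries_of_traceForm_eq_zero htf
  have hD : LieRing.IsNilpotent (LieAlgebra.derivedSeries ℂ L 1) := by
    rw [LieAlgebra.isNilpotent_iff_forall (R := ℂ)]
    rintro ⟨x, hx⟩
    apply LieSubalgebra.isNilpotent_ad_of_isNilpotent_ad
      (LieAlgebra.derivedSeries ℂ L 1 : LieSubalgebra ℂ L) (x := ⟨x, hx⟩)
    apply LieAlgebra.isNilpotent_ad_of_isNilpotent (L := L) (x := x)
    exact (LieModule.isNilpotent_iff_forall' (R := ℂ)).mp hn ⟨x, hx⟩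
  have hS : LieAlgebra.IsSolvable L := by
    obtain ⟨k, hk⟩ := LieAlgebra.IsSolvable.solvable ℂ (LieAlgebra.derivedSeries ℂ L 1)
    rw [LieIdeal.derivedSeries_eq_bot_iff] at hk
    refine LieAlgebra.IsSolvable.mk (R := ℂ) (k := k + 1) ?_
    rw [LieAlgebra.derivedSeries_def, LieAlgebra.derivedSeriesOfIdeal_add]
    exact hk
  obtain ⟨χ, hχ⟩ := LieModule.exists_nontrivial_weightSpace_of_isSolvable ℂ L V
  obtain ⟨⟨v, hv⟩, hv0⟩ := exists_ne (0 : LieModule.weightSpace V χ)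
  have hv1 : v ≠ 0 := by simpa using hv0
  refine ⟨v, hv1, fun s hs => ?_⟩
  rw [LieModule.mem_weightSpace] at hv
  have h1 : s v = χ ⟨s, Submodule.subset_span hs⟩ • v := hv ⟨s, Submodule.subset_span hs⟩
  generalize χ ⟨s, Submodule.subset_span hs⟩ = c at h1
  obtain ⟨n, hn⟩ := hnil s hs
  have hpow : ∀ m : ℕ, (s ^ m) v = c ^ m • v := by
    intro m
    induction m with
    | zero => simp
    | succ m ih => rw [pow_succ, Module.End.mul_apply, h1, map_smul, ih, smul_smul, pow_succ']
  have h2 := hpow n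
  rw [hn, LinearMap.zero_apply] at h2
  rcases smul_eq_zero.mp h2.symm with h | h
  · rw [h1, eq_zero_of_pow_eq_zero h, zero_smul]
  · exact absurd h hv1
end
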